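/- arXiv:1202.6578 — 2 statements merged into one kernel-verified Lean document; each statement's English description precedes it below -/
import Mathlib

section
/- Let u ∈ ℝ⁴ be a future timelike vector, let H(u) be the group of proper orthochronous Lorentz transformations B with Bu = u, let G_u be the group of affine maps x ↦ Bx + b with B ∈ H(u), b ∈ ℝ⁴, and let CG_u be the group of affine maps x ↦ μ B x + b with μ > 0, B ∈ H(u), b ∈ ℝ⁴. Then: (A) an equivalence relation ∼ on ℝ⁴ is G_u-invariant if and only if there exists an additive subgroup H of ℝ such that either (i) x ∼ y ⟺ y − x ∈ {h u : h ∈ H}, or (ii) x ∼ y ⟺ y − x ∈ {w + h u : g_c(w, u) = 0, h ∈ H}; (B) the standard simultaneity relation R_u is the only nontrivial CG_u-invariant equivalence relation on ℝ⁴ that is not the worldline relation x ∼ y ⟺ ∃ s ∈ ℝ, y − x = s u. -/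
noncomputable section

/-- Spacetime `ℝ⁴`, identified with `ℝ³ × ℝ`. -/
abbrev V4 : Type := (Fin 3 → ℝ) × ℝ

/-- The Minkowski form `g_c(x, y) = x̄ ⬝ ȳ - c² x⁴ y⁴`. -/
def mink (c : ℝ) (x y : V4) : ℝ := (∑ i, x.1 i * y.1 i) - c ^ 2 * x.2 * y.2

/-- A vector is future timelike if `g_c(u, u) < 0` and `u⁴ > 0`. -/
def FutureTimelike (c : ℝ) (u : V4) : Prop := mink c u u < 0 ∧ 0 < u.2

/-- A linear map is a Lorentz transformation if it preserves the Minkowski form. -/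
def IsLorentz (c : ℝ) (B : V4 →ₗ[ℝ] V4) : Prop :=
  ∀ x y : V4, mink c (B x) (B y) = mink c x y

/-- A linear map is orthochronous if it maps future timelike vectors to future
timelike vectors. -/
def IsOrthochronous (c : ℝ) (B : V4 →ₗ[ℝ] V4) : Prop :=
  ∀ u : V4, FutureTimelike c u → FutureTimelike c (B u)

/-- A linear map is proper if its determinant is 1. -/
def IsProper (B : V4 →ₗ[ℝ] V4) : Prop := LinearMap.det B = 1

/-- The standard simultaneity relation determined by a future timelike vector `u`:
`x R_u y ↔ g_c(x - y, u) = 0`. -/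
def Rstd (c : ℝ) (u : V4) (x y : V4) : Prop := mink c (x - y) u = 0

/-- Invariance under `G_u`, the group of affine maps `x ↦ Bx + b` whose linear part
is a proper orthochronous Lorentz transformation fixing `u`. -/
def IsGuInvariant (c : ℝ) (u : V4) (r : V4 → V4 → Prop) : Prop :=
  ∀ B : V4 →ₗ[ℝ] V4, IsLorentz c B → IsOrthochronous c B → IsProper B → B u = u →
    ∀ b : V4, ∀ x y : V4, r x y → r (B x + b) (B y + b)

/-- Invariance under `CG_u`, the group of affine maps `x ↦ μ B x + b` with `μ > 0`
and `B` a proper orthochronous Lorentz transformation fixing `u`. -/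
def IsCGuInvariant (c : ℝ) (u : V4) (r : V4 → V4 → Prop) : Prop :=
  ∀ μ : ℝ, 0 < μ →
    ∀ B : V4 →ₗ[ℝ] V4, IsLorentz c B → IsOrthochronous c B → IsProper B → B u = u →
      ∀ b : V4, ∀ x y : V4, r x y → r (μ • B x + b) (μ • B y + b)

/-!
The classes of a translation-invariant equivalence relation are the cosets of an additive subgroup
`S`, and invariance under rotations about `u` means that `S` is stable under them. Let
`v = w + s • u ∈ S` with `w ⟂ u` and `w ≠ 0`. For every `p ⟂ u` some rotation about `u` acts on `v`
as the reflection along `p`: compose that reflection with one along a vector orthogonal to both `u`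
and `v`. Subtracting, `S` contains twice the projection of `w` to every such `p`. These vectors make
up the whole sphere in `u^⊥` around `w` passing through `0`, its chords are all the vectors of
`u^⊥` of length at most `2 ‖w‖`, and multiples of those fill `u^⊥`. Hence `S` either lies on the
line of `u` or contains `u^⊥`.

If `S` is moreover stable under positive scalings, it is a linear subspace. As `ℝ ∙ u` is an atom
and `u^⊥` a coatom among the subspaces, `S` is `⊥`, `ℝ ∙ u`, `u^⊥` or `⊤`.
-/

section Reflection

variable {K V : Type*} [Field K] [AddCommGroup V] [Module K V] {B : LinearMap.BilinForm K V}

lemma exists_orthogonal_reflection [FiniteDimensional K V] (hB : B.IsSymm) {p : V}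
    (hp : B p p ≠ 0) :
    ∃ R : V →ₗ[K] V, B.IsOrthogonal R ∧ LinearMap.det R = -1 ∧
      ∀ x, R x = x - (2 * B x p / B p p) • p := by
  have hrefl : B.IsReflective p := ⟨.of_ne_zero hp, fun y => (IsUnit.mk0 _ hp).dvd⟩
  let R := Module.reflection (hrefl.coroot_apply_self B)
  have hR : R.toLinearMap = LinearMap.transvection (-hrefl.coroot B) p := by
    ext x
    simp [R, Module.reflection_apply, LinearMap.transvection.apply, sub_eq_add_neg]
  refine ⟨R, hrefl.isOrthogonal_reflection B (LinearMap.BilinForm.isSymm_iff.1 hB), ?_, fun x => ?_⟩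
  · rw [hR, LinearMap.transvection.det, LinearMap.neg_apply, hrefl.coroot_apply_self B]
    norm_num
  · have hcoroot : hrefl.coroot B x = 2 * B x p / B p p := by
      rw [eq_div_iff hp, mul_comm, hrefl.apply_self_mul_coroot_apply, hB.eq]
    simp [R, Module.reflection_apply, hcoroot]

/-- `L` lies in the isotropy group of `u`: it is an isometry of `B` of determinant `1` that
fixes `u`. -/
structure IsRotationAbout (B : LinearMap.BilinForm K V) (u : V) (L : V →ₗ[K] V) : Prop where
  isOrthogonal : B.IsOrthogonal L
  det_eq_one : LinearMap.det L = 1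
  map_axis : L u = u

lemma IsRotationAbout.id (B : LinearMap.BilinForm K V) (u : V) :
    IsRotationAbout B u LinearMap.id :=
  ⟨fun _ _ => rfl, LinearMap.det_id, rfl⟩

lemma exists_isRotationAbout_eq_reflection [FiniteDimensional K V] (hB : B.IsSymm) {u p q : V}
    (hp : B p p ≠ 0) (hq : B q q ≠ 0) (hup : B u p = 0) (huq : B u q = 0) :
    ∃ L, IsRotationAbout B u L ∧
      ∀ x, B x q = 0 → L x = x - (2 * B x p / B p p) • p := by
  obtain ⟨P, hP, hPdet, hPx⟩ := exists_orthogonal_reflection hB hp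
  obtain ⟨Q, hQ, hQdet, hQx⟩ := exists_orthogonal_reflection hB hq
  have hfix : ∀ x, B x q = 0 → (P ∘ₗ Q) x = x - (2 * B x p / B p p) • p := by
    intro x hx
    simp [hQx, hPx, hx]
  refine ⟨P ∘ₗ Q, ⟨fun x y => ?_, ?_, ?_⟩, hfix⟩
  · rw [LinearMap.comp_apply, LinearMap.comp_apply, hP, hQ]
  · rw [LinearMap.det_comp, hPdet, hQdet, neg_one_mul, neg_neg]
  · simp [hfix u huq, hup]

lemma exists_ne_zero_apply_eq_zero (hdim : 2 < Module.finrank K V) (B : LinearMap.BilinForm K V)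
    (a b : V) : ∃ m, m ≠ 0 ∧ B m a = 0 ∧ B m b = 0 := by
  have : FiniteDimensional K V := Module.finite_of_finrank_pos (by lia)
  have hker : LinearMap.ker ((B.flip a).prod (B.flip b)) ≠ ⊥ :=
    LinearMap.ker_ne_bot_of_finrank_lt (by simpa using hdim)
  obtain ⟨m, hm, hm0⟩ := Submodule.exists_mem_ne_zero_of_ne_bot hker
  exact ⟨m, hm0, by simpa using hm⟩

lemma exists_eq_add_smul_of_apply_self_ne_zero {u : V} (huu : B u u ≠ 0) (v : V) :
    ∃ (w : V) (a : K), B w u = 0 ∧ v = w + a • u :=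
  ⟨v - (B v u / B u u) • u, B v u / B u u, by simp [huu], (sub_add_cancel _ _).symm⟩

end Reflection

section RotationStableSubgroup

variable {V : Type*} [AddCommGroup V] [Module ℝ V] {B : LinearMap.BilinForm ℝ V} {u : V}
  {S : AddSubgroup V}

lemma exists_orthogonal_apply_self_eq (hdim : 2 < Module.finrank ℝ V)
    (hpos : ∀ w, B w u = 0 → w ≠ 0 → 0 < B w w) (d : V) {a : ℝ} (ha : 0 ≤ a) :
    ∃ m, B m u = 0 ∧ B m d = 0 ∧ B m m = a := by
  obtain ⟨m, hm0, hmu, hmd⟩ := exists_ne_zero_apply_eq_zero hdim B u d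
  have hmm := hpos m hmu hm0
  refine ⟨√(a / B m m) • m, by simp [hmu], by simp [hmd], ?_⟩
  simp only [map_smul, LinearMap.smul_apply, smul_eq_mul]
  rw [← mul_assoc, Real.mul_self_sqrt (by positivity), div_mul_cancel₀ _ hmm.ne']

lemma mem_of_apply_self_eq_two_mul (hdim : 2 < Module.finrank ℝ V) (hB : B.IsSymm)
    (hpos : ∀ w, B w u = 0 → w ≠ 0 → 0 < B w w)
    (hS : ∀ L, IsRotationAbout B u L → ∀ v ∈ S, L v ∈ S)
    {v y : V} (hv : v ∈ S) (hyu : B y u = 0) (hy : B y y = 2 * B v y) : y ∈ S := by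
  have : FiniteDimensional ℝ V := Module.finite_of_finrank_pos (by lia)
  rcases eq_or_ne y 0 with rfl | hy0
  · exact S.zero_mem
  obtain ⟨q, hq0, hqu, hqv⟩ := exists_ne_zero_apply_eq_zero hdim B u v
  have hyy := (hpos y hyu hy0).ne'
  obtain ⟨L, hL, hLx⟩ := exists_isRotationAbout_eq_reflection hB hyy (hpos q hqu hq0).ne'
    (hB.isRefl.eq_zero hyu) (hB.isRefl.eq_zero hqu)
  have hLv : L v = v - y := by
    rw [hLx v (hB.isRefl.eq_zero hqv), ← hy, div_self hyy, one_smul]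
  have hsub := S.sub_mem hv (hS L hL v hv)
  rwa [hLv, sub_sub_cancel] at hsub

lemma mem_of_apply_self_le (hdim : 2 < Module.finrank ℝ V) (hB : B.IsSymm)
    (hpos : ∀ w, B w u = 0 → w ≠ 0 → 0 < B w w)
    (hS : ∀ L, IsRotationAbout B u L → ∀ v ∈ S, L v ∈ S)
    {w : V} {s : ℝ} (hw : B w u = 0) (hv : w + s • u ∈ S)
    {d : V} (hdu : B d u = 0) (hd : B d d ≤ 4 * B w w) : d ∈ S := by
  obtain ⟨m, hmu, hmd, hmm⟩ :=
    exists_orthogonal_apply_self_eq hdim hpos d (a := B w w - B d d / 4) (by linarith)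
  have hdm : B d m = 0 := hB.isRefl.eq_zero hmd
  have hsphere : ∀ z, B z u = 0 → B z z = B w w → w + z ∈ S := by
    intro z hzu hzz
    refine mem_of_apply_self_eq_two_mul hdim hB hpos hS hv (by simp [hw, hzu]) ?_
    have huw : B u w = 0 := hB.isRefl.eq_zero hw
    have huz : B u z = 0 := hB.isRefl.eq_zero hzu
    have hzw : B z w = B w z := hB.eq z w
    simp only [map_add, map_smul, LinearMap.add_apply, LinearMap.smul_apply, huw, huz, hzw, hzz,
      smul_zero]
    ring
  -- `w + (m + d / 2)` and `w + (m - d / 2)` are the end points of a chord of direction `d`.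
  have hplus : w + (m + (1 / 2 : ℝ) • d) ∈ S := by
    refine hsphere _ (by simp [hmu, hdu]) ?_
    simp only [map_add, map_smul, LinearMap.add_apply, LinearMap.smul_apply, smul_eq_mul, hmd, hdm,
      hmm]
    ring
  have hminus : w + (m - (1 / 2 : ℝ) • d) ∈ S := by
    refine hsphere _ (by simp [hmu, hdu]) ?_
    simp only [map_sub, map_smul, LinearMap.sub_apply, LinearMap.smul_apply, smul_eq_mul, hmd, hdm,
      hmm]
    ring
  convert S.sub_mem hplus hminus using 1
  module

lemma mem_of_orthogonal (hdim : 2 < Module.finrank ℝ V) (hB : B.IsSymm)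
    (hpos : ∀ w, B w u = 0 → w ≠ 0 → 0 < B w w)
    (hS : ∀ L, IsRotationAbout B u L → ∀ v ∈ S, L v ∈ S)
    {w : V} {s : ℝ} (hw : B w u = 0) (hw0 : w ≠ 0) (hv : w + s • u ∈ S)
    {d : V} (hdu : B d u = 0) : d ∈ S := by
  have hww := hpos w hw hw0
  obtain ⟨n, hn⟩ := exists_nat_gt (B d d / (4 * B w w))
  have hn1 : (1 : ℝ) ≤ (n + 1 : ℕ) := by exact_mod_cast n.succ_pos
  have hdn : B d d ≤ 4 * B w w * (n + 1 : ℕ) ^ 2 := by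
    rw [div_lt_iff₀ (by positivity)] at hn
    have hsq : (n : ℝ) ≤ (n + 1 : ℕ) ^ 2 := by push_cast; nlinarith
    nlinarith
  have hsmall : ((n + 1 : ℕ) : ℝ)⁻¹ • d ∈ S := by
    refine mem_of_apply_self_le hdim hB hpos hS hw hv (by simp [hdu]) ?_
    simp only [map_smul, LinearMap.smul_apply, smul_eq_mul]
    field_simp
    linarith
  have hmul := S.nsmul_mem hsmall (n + 1)
  rwa [← Nat.cast_smul_eq_nsmul ℝ, smul_inv_smul₀ (by positivity)] at hmul

theorem le_span_or_ker_le_of_rotation_stable (hdim : 2 < Module.finrank ℝ V) (hB : B.IsSymm)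
    (huu : B u u ≠ 0) (hpos : ∀ w, B w u = 0 → w ≠ 0 → 0 < B w w)
    (hS : ∀ L, IsRotationAbout B u L → ∀ v ∈ S, L v ∈ S) :
    S ≤ (ℝ ∙ u).toAddSubgroup ∨ (LinearMap.ker (B.flip u)).toAddSubgroup ≤ S := by
  refine or_iff_not_imp_left.2 fun hline d hd => ?_
  obtain ⟨v, hv, hvu⟩ := SetLike.not_le_iff_exists.1 hline
  obtain ⟨w, s, hw, rfl⟩ := exists_eq_add_smul_of_apply_self_ne_zero huu v
  have hw0 : w ≠ 0 := by
    rintro rfl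
    exact hvu (Submodule.mem_span_singleton.2 ⟨s, (zero_add _).symm⟩)
  exact mem_of_orthogonal hdim hB hpos hS hw hw0 hv hd

theorem submodule_eq_of_rotation_stable (hdim : 2 < Module.finrank ℝ V) (hB : B.IsSymm)
    (huu : B u u ≠ 0) (hpos : ∀ w, B w u = 0 → w ≠ 0 → 0 < B w w) {W : Submodule ℝ V}
    (hW : ∀ L, IsRotationAbout B u L → ∀ v ∈ W, L v ∈ W) :
    W = ⊥ ∨ W = ℝ ∙ u ∨ W = LinearMap.ker (B.flip u) ∨ W = ⊤ := by
  have hu0 : u ≠ 0 := by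
    rintro rfl
    exact huu (by simp)
  have hcoatom : IsCoatom (LinearMap.ker (B.flip u)) :=
    LinearMap.isCoatom_ker_of_surjective
      (LinearMap.surjective fun h => huu (LinearMap.congr_fun h u))
  rcases le_span_or_ker_le_of_rotation_stable (S := W.toAddSubgroup) hdim hB huu hpos hW
    with hline | hspace
  · rcases (nonzero_span_atom u hu0).le_iff.1 hline with h | h <;> simp [h]
  · rcases hcoatom.le_iff.1 hspace with h | h <;> simp [h]

end RotationStableSubgroup

section InvariantRelation

lemma exists_addSubgroup_rel_iff_sub_mem {G : Type*} [AddCommGroup G] {r : G → G → Prop}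
    (hr : Equivalence r) (htrans : ∀ b x y, r x y → r (x + b) (y + b)) :
    ∃ S : AddSubgroup G, ∀ x y, r x y ↔ y - x ∈ S := by
  let con : AddCon G :=
    { r := r
      iseqv := hr
      add' := fun {a b c d} hab hcd => by
        have h := htrans b c d hcd
        rw [add_comm c, add_comm d] at h
        exact hr.trans (htrans c a b hab) h }
  refine ⟨con.addSubgroup, fun x y => ?_⟩
  rw [← neg_add_eq_sub, ← QuotientAddGroup.leftRel_apply]
  exact (congrArg (· x y) (QuotientAddGroup.con_addSubgroup con)).symm.to_iff

lemma exists_submodule_toAddSubgroup_eq {K V : Type*} [Field K] [LinearOrder K]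
    [IsStrictOrderedRing K] [AddCommGroup V] [Module K V] {S : AddSubgroup V}
    (hS : ∀ μ : K, 0 < μ → ∀ v ∈ S, μ • v ∈ S) :
    ∃ W : Submodule K V, W.toAddSubgroup = S := by
  refine ⟨{ S with smul_mem' := fun a v hv => ?_ }, rfl⟩
  rcases lt_trichotomy a 0 with ha | rfl | ha
  · simpa using S.neg_mem (hS (-a) (neg_pos.2 ha) v hv)
  · simp
  · exact hS a ha v hv

variable {V : Type*} [AddCommGroup V] [Module ℝ V] {B : LinearMap.BilinForm ℝ V} {u : V}
  {r : V → V → Prop}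

/-- Invariance of `r` under the maps `x ↦ L x + b` with `L` in the isotropy group of `u`; for the
Minkowski form this is `IsGuInvariant`. -/
def IsIsotropyInvariant (B : LinearMap.BilinForm ℝ V) (u : V) (r : V → V → Prop) : Prop :=
  ∀ L, IsRotationAbout B u L → ∀ b x y, r x y → r (L x + b) (L y + b)

/-- Invariance of `r` under the maps `x ↦ μ • L x + b` with `0 < μ` and `L` in the isotropy group
of `u`; for the Minkowski form this is `IsCGuInvariant`. -/
def IsConformalIsotropyInvariant (B : LinearMap.BilinForm ℝ V) (u : V) (r : V → V → Prop) : Prop :=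
  ∀ μ : ℝ, 0 < μ → ∀ L, IsRotationAbout B u L → ∀ b x y, r x y → r (μ • L x + b) (μ • L y + b)

lemma IsConformalIsotropyInvariant.isIsotropyInvariant (h : IsConformalIsotropyInvariant B u r) :
    IsIsotropyInvariant B u r :=
  fun L hL b x y hxy => by simpa only [one_smul] using h 1 one_pos L hL b x y hxy

lemma IsIsotropyInvariant.exists_rotation_stable_addSubgroup (hinv : IsIsotropyInvariant B u r)
    (hr : Equivalence r) :
    ∃ S : AddSubgroup V, (∀ x y, r x y ↔ y - x ∈ S) ∧
      ∀ L, IsRotationAbout B u L → ∀ v ∈ S, L v ∈ S := by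
  obtain ⟨S, hrS⟩ := exists_addSubgroup_rel_iff_sub_mem hr
    fun b => hinv LinearMap.id (.id B u) b
  refine ⟨S, hrS, fun L hL v hv => ?_⟩
  have h := hinv L hL 0 0 v ((hrS 0 v).2 (by rwa [sub_zero]))
  simpa [hrS] using h

lemma IsConformalIsotropyInvariant.exists_rotation_stable_submodule
    (hinv : IsConformalIsotropyInvariant B u r) (hr : Equivalence r) :
    ∃ W : Submodule ℝ V, (∀ x y, r x y ↔ y - x ∈ W) ∧
      ∀ L, IsRotationAbout B u L → ∀ v ∈ W, L v ∈ W := by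
  obtain ⟨S, hrS, hS⟩ := hinv.isIsotropyInvariant.exists_rotation_stable_addSubgroup hr
  have hscale : ∀ μ : ℝ, 0 < μ → ∀ v ∈ S, μ • v ∈ S := by
    intro μ hμ v hv
    have h := hinv μ hμ LinearMap.id (.id B u) 0 0 v ((hrS 0 v).2 (by rwa [sub_zero]))
    simpa [hrS] using h
  obtain ⟨W, rfl⟩ := exists_submodule_toAddSubgroup_eq hscale
  exact ⟨W, hrS, hS⟩

theorem IsIsotropyInvariant.exists_addSubgroup (hdim : 2 < Module.finrank ℝ V) (hB : B.IsSymm)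
    (huu : B u u ≠ 0) (hpos : ∀ w, B w u = 0 → w ≠ 0 → 0 < B w w) (hr : Equivalence r)
    (hinv : IsIsotropyInvariant B u r) :
    ∃ H : AddSubgroup ℝ,
      (∀ x y, r x y ↔ ∃ h ∈ H, y - x = h • u) ∨
      (∀ x y, r x y ↔ ∃ (w : V) (h : ℝ), B w u = 0 ∧ h ∈ H ∧ y - x = w + h • u) := by
  obtain ⟨S, hrS, hS⟩ := hinv.exists_rotation_stable_addSubgroup hr
  refine ⟨S.comap (LinearMap.toSpanSingleton ℝ V u).toAddMonoidHom, ?_⟩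
  rcases le_span_or_ker_le_of_rotation_stable hdim hB huu hpos hS with hline | hspace
  · refine Or.inl fun x y => (hrS x y).trans ⟨fun hxy => ?_, ?_⟩
    · obtain ⟨h, hh⟩ := Submodule.mem_span_singleton.1 (hline hxy)
      exact ⟨h, by simpa [hh] using hxy, hh.symm⟩
    · rintro ⟨h, hh, hxy⟩
      simpa [hxy] using hh
  · refine Or.inr fun x y => (hrS x y).trans ⟨fun hxy => ?_, ?_⟩
    · obtain ⟨w, h, hw, hwh⟩ := exists_eq_add_smul_of_apply_self_ne_zero huu (y - x)
      rw [hwh] at hxy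
      exact ⟨w, h, hw, (S.add_mem_cancel_left (hspace hw)).1 hxy, hwh⟩
    · rintro ⟨w, h, hw, hh, hxy⟩
      rw [hxy]
      exact S.add_mem (hspace hw) hh

theorem isIsotropyInvariant_of_exists_addSubgroup
    (h : ∃ H : AddSubgroup ℝ,
      (∀ x y, r x y ↔ ∃ h ∈ H, y - x = h • u) ∨
      (∀ x y, r x y ↔ ∃ (w : V) (h : ℝ), B w u = 0 ∧ h ∈ H ∧ y - x = w + h • u)) :
    IsIsotropyInvariant B u r := by
  intro L hL b x y hxy
  have hsub : L y + b - (L x + b) = L (y - x) := by rw [add_sub_add_right_eq_sub, map_sub]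
  obtain ⟨H, hrH | hrH⟩ := h
  · obtain ⟨h, hh, hxy⟩ := (hrH x y).1 hxy
    exact (hrH _ _).2 ⟨h, hh, by rw [hsub, hxy, map_smul, hL.map_axis]⟩
  · obtain ⟨w, h, hw, hh, hxy⟩ := (hrH x y).1 hxy
    have hLw : B (L w) u = 0 := by
      have h := hL.isOrthogonal w u
      rwa [hL.map_axis, hw] at h
    exact (hrH _ _).2 ⟨L w, h, hLw, hh, by rw [hsub, hxy, map_add, map_smul, hL.map_axis]⟩

theorem IsConformalIsotropyInvariant.rel_iff_apply_sub_eq_zero (hdim : 2 < Module.finrank ℝ V)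
    (hB : B.IsSymm) (huu : B u u ≠ 0) (hpos : ∀ w, B w u = 0 → w ≠ 0 → 0 < B w w)
    (hr : Equivalence r) (hinv : IsConformalIsotropyInvariant B u r) (htotal : ¬ ∀ x y, r x y)
    (hidentity : ¬ ∀ x y, r x y → x = y)
    (hworldline : ¬ ∀ x y, r x y ↔ ∃ s : ℝ, y - x = s • u) (x y : V) :
    r x y ↔ B (x - y) u = 0 := by
  obtain ⟨W, hrW, hW⟩ := hinv.exists_rotation_stable_submodule hr
  rcases submodule_eq_of_rotation_stable hdim hB huu hpos hW with rfl | rfl | rfl | rfl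
  · refine absurd (fun x y hxy => ?_) hidentity
    exact (sub_eq_zero.1 ((hrW x y).1 hxy)).symm
  · refine absurd (fun x y => ?_) hworldline
    rw [hrW, Submodule.mem_span_singleton]
    simp only [eq_comm]
  · rw [hrW, sub_mem_comm_iff, LinearMap.mem_ker, LinearMap.BilinForm.flip_apply]
  · exact absurd (fun x y => (hrW x y).2 trivial) htotal

theorem isotropy_of_rest_invariant_equivalences_general (hdim : 2 < Module.finrank ℝ V)
    (hB : B.IsSymm) (huu : B u u ≠ 0) (hpos : ∀ w, B w u = 0 → w ≠ 0 → 0 < B w w) :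
    (∀ r : V → V → Prop, Equivalence r →
      (IsIsotropyInvariant B u r ↔
        ∃ H : AddSubgroup ℝ,
          (∀ x y, r x y ↔ ∃ h ∈ H, y - x = h • u) ∨
          (∀ x y, r x y ↔
            ∃ (w : V) (h : ℝ), B w u = 0 ∧ h ∈ H ∧ y - x = w + h • u))) ∧
    (∀ r : V → V → Prop, Equivalence r → IsConformalIsotropyInvariant B u r →
      (¬ ∀ x y, r x y) → (¬ ∀ x y, r x y → x = y) →
      (¬ ∀ x y, r x y ↔ ∃ s : ℝ, y - x = s • u) →
      ∀ x y, r x y ↔ B (x - y) u = 0) :=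
  ⟨fun _ hr => ⟨IsIsotropyInvariant.exists_addSubgroup hdim hB huu hpos hr,
      isIsotropyInvariant_of_exists_addSubgroup⟩,
    fun _ hr hinv => hinv.rel_iff_apply_sub_eq_zero hdim hB huu hpos hr⟩

end InvariantRelation

section Minkowski

variable {c : ℝ} {u : V4}

/-- The Minkowski form `mink c` bundled as a bilinear form. -/
def minkForm (c : ℝ) : LinearMap.BilinForm ℝ V4 :=
  LinearMap.mk₂ ℝ (mink c)
    (fun x y z => by simp [mink, Fin.sum_univ_three]; ring)
    (fun a x y => by simp [mink, Fin.sum_univ_three]; ring)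
    (fun x y z => by simp [mink, Fin.sum_univ_three]; ring)
    (fun a x y => by simp [mink, Fin.sum_univ_three]; ring)

lemma minkForm_isSymm (c : ℝ) : (minkForm c).IsSymm :=
  ⟨fun x y => by simp only [minkForm, LinearMap.mk₂_apply, mink, Fin.sum_univ_three]; ring⟩

-- The difference of the two sides is `|u⁴ x̄ - x⁴ ū|²`, where `c` cancels.
lemma two_mul_mul_mink_le (c : ℝ) (x u : V4) :
    2 * (x.2 * u.2) * mink c x u ≤ u.2 ^ 2 * mink c x x + x.2 ^ 2 * mink c u u := by
  have h : 0 ≤ ∑ i, (u.2 * x.1 i - x.2 * u.1 i) ^ 2 := Finset.sum_nonneg fun i _ => sq_nonneg _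
  simp only [mink, Fin.sum_univ_three] at h ⊢
  linarith

lemma snd_ne_zero_of_mink_self_neg (hu : mink c u u < 0) : u.2 ≠ 0 := by
  intro h
  have hnonneg : 0 ≤ ∑ i, u.1 i * u.1 i := Finset.sum_nonneg fun i _ => mul_self_nonneg _
  simp only [mink, h, mul_zero, sub_zero] at hu
  exact hu.not_ge hnonneg

lemma mink_self_pos_of_mink_eq_zero (hu : mink c u u < 0) {w : V4} (hwu : mink c w u = 0)
    (hw : w ≠ 0) : 0 < mink c w w := by
  rcases eq_or_ne w.2 0 with hw2 | hw2
  · have hw1 : w.1 ≠ 0 := fun hw1 => hw (Prod.ext hw1 hw2)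
    simpa [mink, hw2, dotProduct] using Matrix.dotProduct_star_self_pos_iff.2 hw1
  · have hu2 : 0 < u.2 ^ 2 := sq_pos_of_ne_zero (snd_ne_zero_of_mink_self_neg hu)
    have hle := two_mul_mul_mink_le c w u
    rw [hwu, mul_zero] at hle
    have hneg : w.2 ^ 2 * mink c u u < 0 := mul_neg_of_pos_of_neg (sq_pos_of_ne_zero hw2) hu
    exact (mul_pos_iff_of_pos_left hu2).1 (by linarith)

lemma snd_mul_snd_mul_mink_neg {x : V4} (hx : mink c x x < 0) (hu : mink c u u < 0) :
    x.2 * u.2 * mink c x u < 0 := by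
  have hu2 : u.2 ^ 2 * mink c x x < 0 :=
    mul_neg_of_pos_of_neg (sq_pos_of_ne_zero (snd_ne_zero_of_mink_self_neg hu)) hx
  have hx2 : x.2 ^ 2 * mink c u u ≤ 0 := mul_nonpos_of_nonneg_of_nonpos (sq_nonneg _) hu.le
  linarith [two_mul_mul_mink_le c x u]

lemma IsLorentz.isOrthochronous_of_map_eq (hu : mink c u u < 0) {L : V4 →ₗ[ℝ] V4}
    (hL : IsLorentz c L) (hLu : L u = u) : IsOrthochronous c L := by
  intro x ⟨hx, hx2⟩
  have hLx : mink c (L x) (L x) < 0 := by rwa [hL]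
  have hLxu : mink c (L x) u = mink c x u := by simpa only [hLu] using hL x u
  refine ⟨hLx, ?_⟩
  have h := mul_pos_of_neg_of_neg (snd_mul_snd_mul_mink_neg hLx hu) (snd_mul_snd_mul_mink_neg hx hu)
  rw [hLxu] at h
  have hprod : 0 < (L x).2 * (x.2 * (u.2 * mink c x u) ^ 2) := by linarith
  exact pos_of_mul_pos_left hprod (by positivity)

lemma isRotationAbout_minkForm_iff (hu : mink c u u < 0) {L : V4 →ₗ[ℝ] V4} :
    IsRotationAbout (minkForm c) u L ↔
      IsLorentz c L ∧ IsOrthochronous c L ∧ IsProper L ∧ L u = u :=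
  ⟨fun h => ⟨h.isOrthogonal,
      IsLorentz.isOrthochronous_of_map_eq hu h.isOrthogonal h.map_axis, h.det_eq_one, h.map_axis⟩,
    fun ⟨hL, _, hdet, hLu⟩ => ⟨hL, hdet, hLu⟩⟩

lemma isGuInvariant_iff_isIsotropyInvariant (hu : mink c u u < 0) (r : V4 → V4 → Prop) :
    IsGuInvariant c u r ↔ IsIsotropyInvariant (minkForm c) u r := by
  simp only [IsGuInvariant, IsIsotropyInvariant, isRotationAbout_minkForm_iff hu, and_imp]

lemma isCGuInvariant_iff_isConformalIsotropyInvariant (hu : mink c u u < 0)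
    (r : V4 → V4 → Prop) :
    IsCGuInvariant c u r ↔ IsConformalIsotropyInvariant (minkForm c) u r := by
  simp only [IsCGuInvariant, IsConformalIsotropyInvariant, isRotationAbout_minkForm_iff hu, and_imp]

end Minkowski

/-- (A) An equivalence relation on `ℝ⁴` is `G_u`-invariant iff, for some additive
subgroup `H` of `ℝ`, either (i) `x ∼ y ↔ y - x ∈ Hu`, or (ii)
`x ∼ y ↔ y - x ∈ ⟨u⟩^⊥ + Hu`.  (B) Standard simultaneity `R_u` is the only
nontrivial `CG_u`-invariant equivalence relation that is not the worldline relation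
`x ∼ y ↔ ∃ s, y - x = s u`. -/
theorem isotropy_of_rest_invariant_equivalences (c : ℝ) (hc : 0 < c) (u : V4)
    (hu : FutureTimelike c u) :
    (∀ r : V4 → V4 → Prop, Equivalence r →
      (IsGuInvariant c u r ↔
        ∃ H : AddSubgroup ℝ,
          (∀ x y : V4, r x y ↔ ∃ h ∈ H, y - x = h • u) ∨
          (∀ x y : V4, r x y ↔
            ∃ (w : V4) (h : ℝ), mink c w u = 0 ∧ h ∈ H ∧ y - x = w + h • u))) ∧
    (∀ r : V4 → V4 → Prop, Equivalence r → IsCGuInvariant c u r →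
      (¬ ∀ x y : V4, r x y) → (¬ ∀ x y : V4, r x y → x = y) →
      (¬ ∀ x y : V4, r x y ↔ ∃ s : ℝ, y - x = s • u) →
      ∀ x y : V4, r x y ↔ Rstd c u x y) := by
  simp only [isGuInvariant_iff_isIsotropyInvariant hu.1,
    isCGuInvariant_iff_isConformalIsotropyInvariant hu.1]
  exact isotropy_of_rest_invariant_equivalences_general (B := minkForm c) (by simp)
    (minkForm_isSymm c) hu.1.ne fun _ => mink_self_pos_of_mink_eq_zero hu.1
end
end

section
/- Fix x̄₀ ∈ ℝ³ and let ℓ = {(x̄₀, s) : s ∈ ℝ} ⊆ ℝ³ × ℝ, and let Ĝ_N be the group of affine bijections of ℝ³ × ℝ of the form (x̄, t) ↦ (λ S (x̄ − x̄₀) + x̄₀, λ t + s₀) with λ > 0, S ∈ SO(3), s₀ ∈ ℝ (the isotropy subgroup of ℓ in the conformal Newton group). Let ∼ be an equivalence relation on ℝ³ × ℝ that is Ĝ_N-invariant, is not the total relation, and such that the equivalence class of some point of ℓ is not contained in ℓ. Then either ∼ is the standard simultaneity (x̄, t) ∼ (ȳ, s) ⟺ t = s, or there exist ĉ > 0 and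 a sign ε ∈ {+1, −1} such that for every p ∈ ℓ the equivalence class of p is [p] = {p} ∪ {p + (ā, a⁴) : ā ∈ ℝ³, a⁴ ∈ ℝ, |ā| = ĉ |a⁴|, ε a⁴ > 0}, i.e., the classes of points of ℓ are translated half-cones of slope ĉ, all opening in the same time direction. -/
/-!
Some point `(x₀, s)` of `ℓ` is related to a point `(x₀ + a, s + c)` with `a ≠ 0`. Moving this pair
by the group, which is transitive on spheres, relates every `q = (x, t)` to the point of `ℓ` at time
`t - k |x - x₀|`, where `k = c / |a|`. If two distinct points of `ℓ` were related, scaling would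
relate all of `ℓ`, hence everything; so `q ∼ q'` exactly when these times coincide. The case `k = 0`
is standard simultaneity, and otherwise the class of a point of `ℓ` is a half-cone of slope
`1 / |k|` opening in the time direction `sign k`.
-/

noncomputable section

/-- A 3×3 real matrix is in SO(3) iff it is orthogonal with determinant 1. -/
def IsSO3 (S : Matrix (Fin 3) (Fin 3) ℝ) : Prop :=
  S.transpose * S = 1 ∧ S.det = 1

/-- Euclidean norm on `ℝ³`. -/
def enorm3 (v : Fin 3 → ℝ) : ℝ := Real.sqrt (∑ i, v i ^ 2)

/-- Invariance under `Ĝ_N`, the isotropy subgroup of the worldline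
`ℓ = {(x̄₀, s) : s ∈ ℝ}` in the conformal Newton group: the maps
`(x̄, t) ↦ (λ S (x̄ - x̄₀) + x̄₀, λ t + s₀)` with `λ > 0`, `S ∈ SO(3)`, `s₀ ∈ ℝ`. -/
def IsGNhatInvariant (x₀ : Fin 3 → ℝ)
    (r : ((Fin 3 → ℝ) × ℝ) → ((Fin 3 → ℝ) × ℝ) → Prop) : Prop :=
  ∀ l : ℝ, 0 < l → ∀ S : Matrix (Fin 3) (Fin 3) ℝ, IsSO3 S → ∀ s₀ : ℝ,
    ∀ p q : (Fin 3 → ℝ) × ℝ, r p q →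
      r (l • S.mulVec (p.1 - x₀) + x₀, l * p.2 + s₀)
        (l • S.mulVec (q.1 - x₀) + x₀, l * q.2 + s₀)

open Module Submodule

section Rotations

variable {E : Type*} [NormedAddCommGroup E] [InnerProductSpace ℝ E]

theorem det_reflection_orthogonal_span_singleton [FiniteDimensional ℝ E] {v : E} (hv : v ≠ 0) :
    LinearMap.det (reflection (ℝ ∙ v)ᗮ).toLinearMap = -1 := by
  rw [det_reflection, orthogonal_orthogonal, finrank_span_singleton hv, pow_one]

theorem exists_ne_zero_inner_eq_zero (hE : 2 ≤ finrank ℝ E) (b : E) :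
    ∃ w : E, w ≠ 0 ∧ inner ℝ w b = 0 := by
  have : FiniteDimensional ℝ E := .of_finrank_pos (by lia)
  have hpos : 0 < finrank ℝ (ℝ ∙ b)ᗮ := by
    have hsum := (ℝ ∙ b).finrank_add_finrank_orthogonal
    have hspan : finrank ℝ (ℝ ∙ b) ≤ 1 := by simpa using finrank_span_le_card (R := ℝ) {b}
    lia
  obtain ⟨w, hw, hw0⟩ := exists_mem_ne_zero_of_ne_bot (one_le_finrank_iff.1 hpos)
  exact ⟨w, hw0, mem_orthogonal_singleton_iff_inner_left.1 hw⟩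

/- The reflection exchanging `a` and `b` has determinant `-1`; a second reflection, in a hyperplane
containing `b`, restores the orientation. -/
theorem exists_linearIsometryEquiv_det_eq_one_apply_eq (hE : 2 ≤ finrank ℝ E) {a b : E}
    (hab : ‖a‖ = ‖b‖) :
    ∃ f : E ≃ₗᵢ[ℝ] E, LinearMap.det f.toLinearMap = 1 ∧ f a = b := by
  have : FiniteDimensional ℝ E := .of_finrank_pos (by lia)
  rcases eq_or_ne a b with rfl | hne
  · exact ⟨.refl ℝ E, LinearMap.det_id, rfl⟩
  obtain ⟨w, hw0, hwb⟩ := exists_ne_zero_inner_eq_zero hE b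
  refine ⟨(reflection (ℝ ∙ (a - b))ᗮ).trans (reflection (ℝ ∙ w)ᗮ), ?_, ?_⟩
  · calc LinearMap.det ((reflection (ℝ ∙ w)ᗮ).toLinearMap ∘ₗ
          (reflection (ℝ ∙ (a - b))ᗮ).toLinearMap)
        = -1 * -1 := by
          rw [LinearMap.det_comp, det_reflection_orthogonal_span_singleton hw0,
            det_reflection_orthogonal_span_singleton (sub_ne_zero.2 hne)]
      _ = 1 := by norm_num
  · rw [LinearIsometryEquiv.trans_apply, reflection_sub hab]
    exact reflection_mem_subspace_eq_self (mem_orthogonal_singleton_iff_inner_right.2 hwb)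

theorem exists_mem_specialOrthogonalGroup_mulVec_eq {n : Type*} [Fintype n] [DecidableEq n]
    [Nontrivial n] {a b : n → ℝ} (hab : ‖WithLp.toLp 2 a‖ = ‖WithLp.toLp 2 b‖) :
    ∃ A ∈ Matrix.specialOrthogonalGroup n ℝ, A.mulVec a = b := by
  have hn : 2 ≤ finrank ℝ (EuclideanSpace ℝ n) := by
    rw [finrank_euclideanSpace]
    exact Fintype.one_lt_card
  obtain ⟨f, hdet, hf⟩ := exists_linearIsometryEquiv_det_eq_one_apply_eq hn hab
  let e := EuclideanSpace.basisFun n ℝ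
  refine ⟨LinearMap.toMatrix e.toBasis e.toBasis f.toLinearMap,
    Matrix.mem_specialOrthogonalGroup_iff.2 ⟨f.toMatrix_mem_unitaryGroup e e, ?_⟩, ?_⟩
  · rw [LinearMap.det_toMatrix, hdet]
  · have hrepr := LinearMap.toMatrix_mulVec_repr e.toBasis e.toBasis f.toLinearMap (WithLp.toLp 2 a)
    have hcoord (x : n → ℝ) : ⇑(e.toBasis.repr (WithLp.toLp 2 x)) = x := by
      ext i
      simp [e]
    have hfa : f.toLinearMap (WithLp.toLp 2 a) = WithLp.toLp 2 b := hf
    rwa [hfa, hcoord, hcoord] at hrepr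

end Rotations

section SphereTransitive

variable {V : Type*} [AddCommGroup V] [Module ℝ V]

/-- Transitivity of a set `K` of linear maps on the spheres `N x = const`. The norm `N` is explicit
because the norm instance on `ι → ℝ` is the supremum norm. -/
def IsSphereTransitive (N : Seminorm ℝ V) (K : Set (V →ₗ[ℝ] V)) : Prop :=
  ∀ a b, N a = N b → ∃ S ∈ K, S a = b

variable {N : Seminorm ℝ V} {K : Set (V →ₗ[ℝ] V)} {a : V}

theorem IsSphereTransitive.eq_zero (hK : IsSphereTransitive N K) (ha : N a = 0) : a = 0 := by
  obtain ⟨S, -, hS⟩ := hK 0 a (by rw [map_zero, ha])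
  rw [← hS, map_zero]

theorem IsSphereTransitive.pos (hK : IsSphereTransitive N K) (ha : a ≠ 0) : 0 < N a :=
  (apply_nonneg N a).lt_of_ne' (mt hK.eq_zero ha)

end SphereTransitive

section ConeRelations

variable {V : Type*} [AddCommGroup V] [Module ℝ V]

/-- Invariance of a relation on `V × ℝ` under the similarities
`(x, t) ↦ (l S (x - x₀) + x₀, l t + s₀)` with `l > 0` and `S ∈ K`, the analogue of `Ĝ_N` with `K` in
place of `SO(3)`. -/
def IsSimilarityInvariant (K : Set (V →ₗ[ℝ] V)) (x₀ : V) (r : V × ℝ → V × ℝ → Prop) : Prop :=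
  ∀ l : ℝ, 0 < l → ∀ S ∈ K, ∀ s₀ : ℝ, ∀ p q : V × ℝ, r p q →
    r (l • S (p.1 - x₀) + x₀, l * p.2 + s₀) (l • S (q.1 - x₀) + x₀, l * q.2 + s₀)

/-- The time at which the half-cone `{(x, t) | t - s = k * N (x - x₀)}` through `p` has its apex
`(x₀, s)`. Here `k` is an inverse slope, whose sign is the time direction of the opening. -/
def apexTime (N : Seminorm ℝ V) (x₀ : V) (k : ℝ) (p : V × ℝ) : ℝ :=
  p.2 - k * N (p.1 - x₀)

variable {N : Seminorm ℝ V} {K : Set (V →ₗ[ℝ] V)} {x₀ : V} {r : V × ℝ → V × ℝ → Prop}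

theorem apexTime_mk_self (k s : ℝ) : apexTime N x₀ k (x₀, s) = s := by
  simp [apexTime]

theorem IsSimilarityInvariant.rel_smul (hinv : IsSimilarityInvariant K x₀ r)
    (hK : IsSphereTransitive N K) {l : ℝ} (hl : 0 < l) {a b : V} (hab : N b = l * N a) {s c : ℝ}
    (h : r (x₀, s) (x₀ + a, s + c)) (s' : ℝ) :
    r (x₀, s') (x₀ + b, s' + l * c) := by
  obtain ⟨S, hS, hSab⟩ := hK (l • a) b (by
    rw [map_smul_eq_mul, Real.norm_of_nonneg hl.le, hab])
  have hmove := hinv l hl S hS (s' - l * s) _ _ h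
  simp only [sub_self, map_zero, smul_zero, zero_add, add_sub_cancel_left, ← map_smul,
    hSab] at hmove
  convert hmove using 2
  · ring
  · exact add_comm x₀ b
  · ring

theorem IsSimilarityInvariant.rel_axis_of_rel_of_ne (hinv : IsSimilarityInvariant K x₀ r)
    (hK : IsSphereTransitive N K) (hr : Equivalence r) {s t : ℝ} (hst : r (x₀, s) (x₀, t))
    (hne : s ≠ t) (u v : ℝ) : r (x₀, u) (x₀, v) := by
  wlog hlt : s < t generalizing s t
  · exact this (hr.symm hst) hne.symm (hne.lt_or_gt.resolve_left hlt)
  wlog huv : u < v generalizing u v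
  · rcases (not_lt.1 huv).eq_or_lt with rfl | hvu
    · exact hr.refl _
    · exact hr.symm (this v u hvu)
  have hts : 0 < t - s := sub_pos.2 hlt
  have hscale := hinv.rel_smul hK (l := (v - u) / (t - s)) (div_pos (sub_pos.2 huv) hts)
    (a := 0) (b := 0) (s := s) (c := t - s) (by simp) (by simpa using hst) u
  simpa [div_mul_cancel₀ _ hts.ne'] using hscale

theorem IsSimilarityInvariant.exists_rel_apexTime (hinv : IsSimilarityInvariant K x₀ r)
    (hK : IsSphereTransitive N K) (hr : Equivalence r)
    (hclass : ∃ p q : V × ℝ, p.1 = x₀ ∧ r p q ∧ q.1 ≠ x₀) :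
    ∃ k : ℝ, ∀ q : V × ℝ, r (x₀, apexTime N x₀ k q) q := by
  obtain ⟨⟨p, s⟩, ⟨y, u⟩, hp : p = x₀, hrel, hy : y ≠ x₀⟩ := hclass
  subst p
  have hpos : 0 < N (y - x₀) := hK.pos (sub_ne_zero.2 hy)
  refine ⟨(u - s) / N (y - x₀), fun ⟨x, t⟩ ↦ ?_⟩
  rcases eq_or_ne x x₀ with rfl | hx
  · rw [apexTime_mk_self]
    exact hr.refl _
  have hmove := hinv.rel_smul hK (l := N (x - x₀) / N (y - x₀)) (a := y - x₀) (b := x - x₀)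
    (s := s) (c := u - s) (div_pos (hK.pos (sub_ne_zero.2 hx)) hpos)
    (div_mul_cancel₀ _ hpos.ne').symm (by simpa using hrel)
    (apexTime N x₀ ((u - s) / N (y - x₀)) (x, t))
  convert hmove using 2
  · exact (add_sub_cancel x₀ x).symm
  · rw [apexTime]
    ring

theorem IsSimilarityInvariant.exists_rel_iff_apexTime_eq (hinv : IsSimilarityInvariant K x₀ r)
    (hK : IsSphereTransitive N K) (hr : Equivalence r) (hnot_total : ¬ ∀ p q : V × ℝ, r p q)
    (hclass : ∃ p q : V × ℝ, p.1 = x₀ ∧ r p q ∧ q.1 ≠ x₀) :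
    ∃ k : ℝ, ∀ p q : V × ℝ, r p q ↔ apexTime N x₀ k p = apexTime N x₀ k q := by
  obtain ⟨k, hcone⟩ := hinv.exists_rel_apexTime hK hr hclass
  have hreduce (p q : V × ℝ) :
      r (x₀, apexTime N x₀ k p) (x₀, apexTime N x₀ k q) ↔ r p q :=
    ⟨fun h ↦ hr.trans (hr.symm (hcone p)) (hr.trans h (hcone q)),
      fun h ↦ hr.trans (hcone p) (hr.trans h (hr.symm (hcone q)))⟩
  refine ⟨k, fun p q ↦ (hreduce p q).symm.trans ⟨fun h ↦ ?_, fun h ↦ h ▸ hr.refl _⟩⟩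
  by_contra hne
  exact hnot_total fun p' q' ↦ (hreduce p' q').1 (hinv.rel_axis_of_rel_of_ne hK hr h hne _ _)

theorem eq_mul_iff_eq_inv_abs_mul_abs {k n c : ℝ} (hk : k ≠ 0) (hn : 0 < n) :
    c = k * n ↔ n = |k|⁻¹ * |c| ∧ 0 < SignType.sign k * c := by
  have hk' : 0 < |k| := abs_pos.2 hk
  constructor
  · rintro rfl
    refine ⟨?_, ?_⟩
    · rw [abs_mul, abs_of_pos hn, inv_mul_cancel_left₀ hk'.ne']
    · rw [← mul_assoc, sign_mul_self]
      exact mul_pos hk' hn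
  · rintro ⟨hnc, hsign⟩
    have habs : |c| = |k| * n := by rw [hnc, mul_inv_cancel_left₀ hk'.ne']
    rcases hk.lt_or_gt with hneg | hpos
    · have hc : c < 0 := by simpa [hneg] using hsign
      rwa [abs_of_neg hc, abs_of_neg hneg, neg_mul, neg_inj] at habs
    · have hc : 0 < c := by simpa [hpos] using hsign
      rwa [abs_of_pos hc, abs_of_pos hpos] at habs

theorem IsSphereTransitive.apexTime_eq_iff_mem_halfCone (hK : IsSphereTransitive N K) {k : ℝ}
    (hk : k ≠ 0) (s : ℝ) (q : V × ℝ) :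
    apexTime N x₀ k (x₀, s) = apexTime N x₀ k q ↔
      q = (x₀, s) ∨ ∃ (a : V) (a4 : ℝ), q = (x₀ + a, s + a4) ∧
        N a = |k|⁻¹ * |a4| ∧ 0 < SignType.sign k * a4 := by
  obtain ⟨a, c, rfl⟩ : ∃ (a : V) (c : ℝ), q = (x₀ + a, s + c) := ⟨q.1 - x₀, q.2 - s, by simp⟩
  have hapex : apexTime N x₀ k (x₀, s) = apexTime N x₀ k (x₀ + a, s + c) ↔ c = k * N a := by
    rw [apexTime_mk_self, apexTime, add_sub_cancel_left, add_sub_assoc, left_eq_add, sub_eq_zero]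
  simp only [hapex, Prod.mk.injEq, add_eq_left, add_right_inj]
  rcases eq_or_ne a 0 with rfl | ha
  · constructor
    · intro hc
      exact .inl ⟨rfl, by simpa using hc⟩
    · rintro (⟨-, rfl⟩ | ⟨_, _, ⟨rfl, rfl⟩, hN, -⟩)
      · rw [map_zero, mul_zero]
      · simpa [hk] using hN
  · simp only [ha, false_and, false_or, eq_mul_iff_eq_inv_abs_mul_abs hk (hK.pos ha)]
    exact ⟨fun h ↦ ⟨a, c, ⟨rfl, rfl⟩, h⟩, by rintro ⟨_, _, ⟨rfl, rfl⟩, h⟩; exact h⟩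

theorem GNhat_invariant_equivalences_general (hK : IsSphereTransitive N K) (hr : Equivalence r)
    (hinv : IsSimilarityInvariant K x₀ r) (hnot_total : ¬ ∀ p q : V × ℝ, r p q)
    (hclass : ∃ p q : V × ℝ, p.1 = x₀ ∧ r p q ∧ q.1 ≠ x₀) :
    (∀ p q : V × ℝ, r p q ↔ p.2 = q.2) ∨
    ∃ chat : ℝ, 0 < chat ∧ ∃ ε : ℝ, (ε = 1 ∨ ε = -1) ∧
      ∀ p : V × ℝ, p.1 = x₀ →
        ∀ q : V × ℝ, r p q ↔
          (q = p ∨ ∃ (a : V) (a4 : ℝ), q = (p.1 + a, p.2 + a4) ∧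
            N a = chat * |a4| ∧ 0 < ε * a4) := by
  obtain ⟨k, hk⟩ := hinv.exists_rel_iff_apexTime_eq hK hr hnot_total hclass
  rcases eq_or_ne k 0 with rfl | hk0
  · exact .inl fun p q ↦ by simpa [apexTime] using hk p q
  refine .inr ⟨|k|⁻¹, inv_pos.2 (abs_pos.2 hk0), SignType.sign k, ?_, ?_⟩
  · rcases hk0.lt_or_gt with hneg | hpos
    · exact .inr (by simp [hneg])
    · exact .inl (by simp [hpos])
  · rintro ⟨_, s⟩ rfl q
    exact (hk _ q).trans (hK.apexTime_eq_iff_mem_halfCone hk0 s q)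

end ConeRelations

section Euclidean

/-- The Euclidean norm on `ι → ℝ`, transported from `EuclideanSpace ℝ ι`. -/
def euclideanSeminorm (ι : Type*) [Fintype ι] : Seminorm ℝ (ι → ℝ) :=
  (normSeminorm ℝ (EuclideanSpace ℝ ι)).comp (WithLp.linearEquiv 2 ℝ (ι → ℝ)).symm.toLinearMap

/-- The group `SO(n)` acting on column vectors, as a set of linear maps. -/
def specialOrthogonalMaps (n : Type*) [Fintype n] [DecidableEq n] : Set ((n → ℝ) →ₗ[ℝ] n → ℝ) :=
  Matrix.mulVecLin '' Matrix.specialOrthogonalGroup n ℝ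

theorem isSphereTransitive_specialOrthogonalMaps (n : Type*) [Fintype n] [DecidableEq n]
    [Nontrivial n] : IsSphereTransitive (euclideanSeminorm n) (specialOrthogonalMaps n) := by
  intro a b hab
  obtain ⟨A, hA, hAab⟩ := exists_mem_specialOrthogonalGroup_mulVec_eq hab
  exact ⟨A.mulVecLin, ⟨A, hA, rfl⟩, hAab⟩

theorem euclideanSeminorm_fin_three (v : Fin 3 → ℝ) : euclideanSeminorm (Fin 3) v = enorm3 v := by
  change ‖WithLp.toLp 2 v‖ = enorm3 v
  simp only [EuclideanSpace.norm_eq, Real.norm_eq_abs, sq_abs, enorm3]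

theorem isSO3_iff_mem_specialOrthogonalGroup {S : Matrix (Fin 3) (Fin 3) ℝ} :
    IsSO3 S ↔ S ∈ Matrix.specialOrthogonalGroup (Fin 3) ℝ := by
  rw [Matrix.mem_specialOrthogonalGroup_iff, Matrix.mem_orthogonalGroup_iff']
  rfl

theorem IsGNhatInvariant.isSimilarityInvariant {x₀ : Fin 3 → ℝ}
    {r : (Fin 3 → ℝ) × ℝ → (Fin 3 → ℝ) × ℝ → Prop} (hinv : IsGNhatInvariant x₀ r) :
    IsSimilarityInvariant (specialOrthogonalMaps (Fin 3)) x₀ r := by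
  rintro l hl _ ⟨S, hS, rfl⟩
  exact hinv l hl S (isSO3_iff_mem_specialOrthogonalGroup.2 hS)

end Euclidean

/-- Sarkar–Stachel version of Malament's theorem for the conformal Newton isotropy
group of the line `ℓ = {(x̄₀, s)}`: a `Ĝ_N`-invariant equivalence relation which is
not total and for which the class of some point of `ℓ` is not contained in `ℓ` is
either standard simultaneity `t = s`, or its classes at points of `ℓ` are translated
half-cones `[p] = {p} ∪ {p + (ā, a⁴) : |ā| = ĉ |a⁴|, ε a⁴ > 0}` of some slope
`ĉ > 0`, all opening in the same time direction `ε`. -/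
theorem GNhat_invariant_equivalences (x₀ : Fin 3 → ℝ)
    (r : ((Fin 3 → ℝ) × ℝ) → ((Fin 3 → ℝ) × ℝ) → Prop) (hr : Equivalence r)
    (hinv : IsGNhatInvariant x₀ r)
    (hnot_total : ¬ ∀ p q : (Fin 3 → ℝ) × ℝ, r p q)
    (hclass : ∃ p q : (Fin 3 → ℝ) × ℝ, p.1 = x₀ ∧ r p q ∧ q.1 ≠ x₀) :
    (∀ p q : (Fin 3 → ℝ) × ℝ, r p q ↔ p.2 = q.2) ∨
    ∃ chat : ℝ, 0 < chat ∧ ∃ ε : ℝ, (ε = 1 ∨ ε = -1) ∧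
      ∀ p : (Fin 3 → ℝ) × ℝ, p.1 = x₀ →
        ∀ q : (Fin 3 → ℝ) × ℝ, r p q ↔
          (q = p ∨ ∃ (a : Fin 3 → ℝ) (a4 : ℝ), q = (p.1 + a, p.2 + a4) ∧
            enorm3 a = chat * |a4| ∧ 0 < ε * a4) := by
  simpa only [euclideanSeminorm_fin_three] using GNhat_invariant_equivalences_general
    (isSphereTransitive_specialOrthogonalMaps _) hr hinv.isSimilarityInvariant hnot_total hclass
end
end
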